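/- Let σ ⊆ E be a convex cone, V ⊆ E a finite nonempty set, Δ = convexHull(V) + σ, and let δ ⊆ ℝ × E be the homogenization of Δ. Then δ is pointed if and only if σ is pointed; that is, δ ∩ (−δ) = {(0,0)} if and only if σ ∩ (−σ) = {0}. -/

import Mathlib

open scoped RealInnerProductSpace Pointwise

/-- A convex cone: contains `0`, and is closed under addition and under
multiplication by nonnegative real scalars. -/
def IsConvexCone {E : Type*} [AddCommMonoid E] [Module ℝ E] (σ : Set E) : Prop :=
  (0 : E) ∈ σ ∧ (∀ x ∈ σ, ∀ y ∈ σ, x + y ∈ σ) ∧ ∀ c : ℝ, 0 ≤ c → ∀ x ∈ σ, c • x ∈ σ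

/-- The convex cone generated by a set `T`: the set of all finite nonnegative
linear combinations of elements of `T`. -/
def coneGen {E : Type*} [AddCommMonoid E] [Module ℝ E] (T : Set E) : Set E :=
  {x | ∃ (n : ℕ) (c : Fin n → ℝ) (v : Fin n → E),
    (∀ i, 0 ≤ c i) ∧ (∀ i, v i ∈ T) ∧ x = ∑ i, c i • v i}

/-- The dual cone of a set in a real inner product space:
`S* = {u | ⟪u,v⟫ ≥ 0 for all v ∈ S}`. -/
def dualCone {E : Type*} [NormedAddCommGroup E] [InnerProductSpace ℝ E] (S : Set E) : Set E :=
  {u | ∀ v ∈ S, 0 ≤ ⟪u, v⟫}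

/-- The dual cone of a set in `ℝ × E`, with respect to the inner product
`⟪(r,u),(k,v)⟫ = r·k + ⟪u,v⟫`. -/
def dualConeProd {E : Type*} [NormedAddCommGroup E] [InnerProductSpace ℝ E]
    (S : Set (ℝ × E)) : Set (ℝ × E) :=
  {p | ∀ q ∈ S, 0 ≤ p.1 * q.1 + ⟪p.2, q.2⟫}

/-- The homogenization of a polyhedron `Δ` with tail cone `σ`: the convex cone
in `ℝ × E` generated by `({0} × σ) ∪ ({1} × Δ)`. -/
def homog {E : Type*} [AddCommMonoid E] [Module ℝ E] (σ Δ : Set E) : Set (ℝ × E) :=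
  coneGen ((({0} : Set ℝ) ×ˢ σ) ∪ (({1} : Set ℝ) ×ˢ Δ))

/-!
Generators of the homogenization have height `0` or `1`, so a point and its negative can both lie in
it only at height `0`; and at height `0` no generator from `{1} × Δ` can contribute, which leaves
`{0} × σ`. Hence the lineality space of the homogenization is `{0} × (σ ∩ -σ)`, whatever `Δ` is.
-/

/-- The points of `ℝ × E` of positive height, together with a copy of `σ` at height `0`. For a
convex cone `σ` this is a convex cone containing every homogenization with tail cone `σ`. -/
def lexCone {E : Type*} (σ : Set E) : Set (ℝ × E) :=
  {p | 0 < p.1 ∨ p.1 = 0 ∧ p.2 ∈ σ}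

theorem lexCone_inter_neg_subset {E : Type*} [Neg E] (σ : Set E) :
    lexCone σ ∩ -lexCone σ ⊆ {0} ×ˢ (σ ∩ -σ) := by
  rintro ⟨r, x⟩ ⟨h, h'⟩
  change 0 < r ∨ r = 0 ∧ x ∈ σ at h
  change 0 < -r ∨ -r = 0 ∧ -x ∈ σ at h'
  rcases h with hr | ⟨rfl, hx⟩
  · rcases h' with hr' | ⟨hr', -⟩ <;> linarith
  · rcases h' with hr' | ⟨-, hx'⟩
    · simp at hr'
    · exact ⟨rfl, hx, hx'⟩

section Cone

variable {E : Type*} [AddCommMonoid E] [Module ℝ E]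

theorem subset_coneGen (T : Set E) : T ⊆ coneGen T :=
  fun x hx ↦ ⟨1, fun _ ↦ 1, fun _ ↦ x, fun _ ↦ zero_le_one, fun _ ↦ hx, by simp⟩

theorem IsConvexCone.coneGen_subset {C T : Set E} (hC : IsConvexCone C) (hT : T ⊆ C) :
    coneGen T ⊆ C := by
  obtain ⟨zero_mem, add_mem, smul_mem⟩ := hC
  rintro _ ⟨n, c, v, hc, hv, rfl⟩
  exact Finset.sum_induction _ (· ∈ C) (fun x y hx hy ↦ add_mem x hx y hy) zero_mem
    fun i _ ↦ smul_mem (c i) (hc i) (v i) (hT (hv i))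

theorem isConvexCone_lexCone {σ : Set E} (hσ : IsConvexCone σ) : IsConvexCone (lexCone σ) := by
  obtain ⟨zero_mem, add_mem, smul_mem⟩ := hσ
  refine ⟨Or.inr ⟨rfl, zero_mem⟩, ?_, ?_⟩
  · rintro ⟨r, x⟩ (hr : 0 < r ∨ r = 0 ∧ x ∈ σ) ⟨s, y⟩ (hs : 0 < s ∨ s = 0 ∧ y ∈ σ)
    change 0 < r + s ∨ r + s = 0 ∧ x + y ∈ σ
    rcases hr with hr | ⟨rfl, hx⟩ <;> rcases hs with hs | ⟨rfl, hy⟩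
    · exact Or.inl (add_pos hr hs)
    · exact Or.inl (by simpa using hr)
    · exact Or.inl (by simpa using hs)
    · exact Or.inr ⟨add_zero 0, add_mem x hx y hy⟩
  · rintro c hc ⟨r, x⟩ (hr : 0 < r ∨ r = 0 ∧ x ∈ σ)
    change 0 < c * r ∨ c * r = 0 ∧ c • x ∈ σ
    rcases hr with hr | ⟨rfl, hx⟩
    · rcases hc.eq_or_lt with rfl | hc
      · exact Or.inr ⟨zero_mul r, by simpa using zero_mem⟩
      · exact Or.inl (mul_pos hc hr)
    · exact Or.inr ⟨mul_zero c, smul_mem c hc x hx⟩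

theorem singleton_zero_prod_subset_homog (σ Δ : Set E) : ({0} : Set ℝ) ×ˢ σ ⊆ homog σ Δ :=
  Set.subset_union_left.trans (subset_coneGen _)

theorem IsConvexCone.homog_subset_lexCone {σ : Set E} (hσ : IsConvexCone σ) (Δ : Set E) :
    homog σ Δ ⊆ lexCone σ := by
  refine (isConvexCone_lexCone hσ).coneGen_subset (Set.union_subset ?_ ?_)
  · rintro ⟨_, x⟩ ⟨rfl, hx⟩
    exact Or.inr ⟨rfl, hx⟩
  · rintro ⟨_, x⟩ ⟨rfl, -⟩
    exact Or.inl zero_lt_one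

end Cone

section Lineality

variable {E : Type*} [AddCommGroup E] [Module ℝ E]

theorem IsConvexCone.homog_inter_neg {σ : Set E} (hσ : IsConvexCone σ) (Δ : Set E) :
    homog σ Δ ∩ -homog σ Δ = {0} ×ˢ (σ ∩ -σ) := by
  apply Set.Subset.antisymm
  · have hsub := hσ.homog_subset_lexCone Δ
    exact (Set.inter_subset_inter hsub (Set.neg_subset_neg.2 hsub)).trans
      (lexCone_inter_neg_subset σ)
  · rintro ⟨_, x⟩ ⟨rfl, hx, hx'⟩
    exact ⟨singleton_zero_prod_subset_homog σ Δ ⟨rfl, hx⟩,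
      singleton_zero_prod_subset_homog σ Δ ⟨neg_zero, hx'⟩⟩

theorem homogenization_pointed_iff_general {σ : Set E} (hσ : IsConvexCone σ) (Δ : Set E) :
    homog σ Δ ∩ -homog σ Δ = {0} ↔ σ ∩ -σ = {0} := by
  rw [hσ.homog_inter_neg, ← Prod.mk_zero_zero, ← Set.singleton_prod_singleton,
    Set.singleton_prod, Set.singleton_prod]
  exact (Prod.mk_right_injective 0).image_injective.eq_iff

end Lineality

/-- the homogenization `δ` is pointed iff `σ` is pointed. -/
theorem homogenization_pointed_iff
    {E : Type*} [NormedAddCommGroup E] [InnerProductSpace ℝ E] [FiniteDimensional ℝ E]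
    (σ : Set E) (hσ : IsConvexCone σ) (V : Finset E) (hV : V.Nonempty)
    (Δ : Set E) (hΔ : Δ = convexHull ℝ (V : Set E) + σ)
    (δ : Set (ℝ × E)) (hδ : δ = homog σ Δ) :
    δ ∩ (-δ) = {(0 : ℝ × E)} ↔ σ ∩ (-σ) = {(0 : E)} := by
  subst hδ
  exact homogenization_pointed_iff_general hσ Δ
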